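/- (Comparison with Hoeffding's bound.) Let a < b be reals, D⁺ := (−∞, b], α ∈ (0, 0.5], and n ≥ 1. Let β ∈ ℝ be such that P( U_{(i)} ≥ i/n − β for all 1 ≤ i ≤ n ) = 1 − α, where U = (U_1,…,U_n) are i.i.d. Uniform(0,1) with order statistics U_{(1)} ≤ … ≤ U_{(n)}, and define ℓ ∈ [0,1]ⁿ by ℓ_i := max(0, i/n − β). Then for every x ∈ [a,b]ⁿ, using T(y) := m_{D⁺}(y,ℓ): b^α_{D⁺,T}(x) ≤ x̄ + (b − a)·√( ln(1/α) / (2n) ), where x̄ := (1/n)Σ_{i=1}^n x_i is the sample mean; moreover the inequality is strict when n ≥ 3. -/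

import Mathlib

open MeasureTheory Set

/-- The sorted rearrangement (order statistics) of a finite real vector:
`sortedVec x i` is the (i+1)-st order statistic `x_{(i+1)}` (0-indexed). -/
noncomputable def sortedVec {n : ℕ} (x : Fin n → ℝ) : Fin n → ℝ :=
  x ∘ ⇑(Tuple.sort x)

/-- The induced mean `m(x, ℓ) = s - ∑ ℓ_{(i)} (x_{(i+1)} - x_{(i)})`, with `x_{(n+1)} := s`. -/
noncomputable def inducedMean {n : ℕ} (s : ℝ) (x ℓ : Fin n → ℝ) : ℝ :=
  s - ∑ i : Fin n, sortedVec ℓ i * ((Fin.snoc (sortedVec x) s : Fin (n+1) → ℝ) i.succ - sortedVec x i)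

/-- `S_{D,T}(x) = {y ∈ Dⁿ : T y ≤ T x}`. -/
def SsetD {n : ℕ} (D : Set ℝ) (T : (Fin n → ℝ) → ℝ) (x : Fin n → ℝ) : Set (Fin n → ℝ) :=
  {y | (∀ i, y i ∈ D) ∧ T y ≤ T x}

/-- `b_{D,T}(x, u) = sup_{z ∈ S_{D,T}(x)} m_{sup D}(z, u)`. -/
noncomputable def bfun {n : ℕ} (D : Set ℝ) (T : (Fin n → ℝ) → ℝ) (x u : Fin n → ℝ) : ℝ :=
  sSup ((fun z => inducedMean (sSup D) z u) '' SsetD D T x)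

/-- The uniform probability measure on `[0,1]`. -/
noncomputable def unif01 : Measure ℝ := volume.restrict (Icc (0:ℝ) 1)

/-- The law of an i.i.d. sample of size `n` from Uniform(0,1). -/
noncomputable def unifPi (n : ℕ) : Measure (Fin n → ℝ) := Measure.pi fun _ => unif01

/-- The `p`-quantile of the random variable `Y` under `μ`:
`Q(p, Y) = inf {y : P(Y ≤ y) ≥ p}`. -/
noncomputable def rquantile {Ω : Type*} [MeasurableSpace Ω] (μ : Measure Ω)
    (Y : Ω → ℝ) (p : ℝ) : ℝ :=
  sInf {y : ℝ | ENNReal.ofReal p ≤ μ {ω | Y ω ≤ y}}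

/-- The upper confidence bound `b^α_{D,T}(x) = Q(1 - α, b_{D,T}(x, U))`, `U` i.i.d. Uniform(0,1). -/
noncomputable def ucb {n : ℕ} (D : Set ℝ) (T : (Fin n → ℝ) → ℝ) (α : ℝ)
    (x : Fin n → ℝ) : ℝ :=
  rquantile (unifPi n) (bfun D T x) (1 - α)

/-- The stairstep function `G_{x,ℓ}` with top value at `s`. -/
noncomputable def stairstep {n : ℕ} (s : ℝ) (x ℓ : Fin n → ℝ) (t : ℝ) : ℝ :=
  if s ≤ t then 1 else sSup ({0} ∪ (sortedVec ℓ '' {i | sortedVec x i ≤ t}))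

/-- The `k`-th smallest value (1-indexed) among `m 0, …, m (L-1)`. -/
noncomputable def kthSmallest {L : ℕ} (m : Fin L → ℝ) (k : ℕ) : ℝ :=
  sInf {y : ℝ | k ≤ Nat.card {j : Fin L // m j ≤ y}}

/-!
Let `β` be the constant of the one-sided Kolmogorov–Smirnov band. The band confines the induced
mean to at most `x̄ + (b - a) β`, so everything reduces to a strict one-sided
Dvoretzky–Kiefer–Wolfowitz inequality: the band of width `ε` fails with probability less than
`exp (-2 n ε²)`.

Split that failure according to the last index `i` with `U_(i) < s_i := i / n - ε`. There exactly
`i` sample points lie below `s_i`, and adding to the uniform law an atom of mass `κ` at `0`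
multiplies the measure of this event by exactly `(1 + κ / s_i) ^ i`. As the events are disjoint and
the enlarged law has mass `1 + κ`, the weighted probabilities add up to at most `(1 + κ) ^ n`.

It remains to choose `κ` so that `(s + ε) log (1 + κ / s) - log (1 + κ) > 2 ε²` for all `s` in
`(0, 1 - ε]`. Take `p` such that the tangent to the log-odds at `p` meets their graph again at
`p + ε`, and `κ` such that the enlarged law, normalised, gives `[0, p]` the probability `p + ε`.
Then the left side is smallest at `s = p`, where it is a Bernoulli divergence bounded by Pinsker's
inequality, or at `s = 1 - ε`, where an elementary estimate of the logarithm suffices.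
-/

section LogOdds

open Filter Topology

/-- The log-odds `log (p / (1 - p))`. Comparing its chords with its tangents determines the tilt. -/
noncomputable def logit (p : ℝ) : ℝ := Real.log (p / (1 - p))

lemma logit_one_add_div_two {x : ℝ} : logit ((1 + x) / 2) = Real.log ((1 + x) / (1 - x)) := by
  rw [logit, show 1 - (1 + x) / 2 = (1 - x) / 2 by ring, div_div_div_cancel_right₀ two_ne_zero]

lemma logit_one_sub (p : ℝ) : logit (1 - p) = -logit p := by
  rw [logit, logit, sub_sub_cancel, ← Real.log_inv, inv_div]

lemma two_mul_lt_logit {x : ℝ} (h0 : 0 < x) (h1 : x < 1) : 2 * x < logit ((1 + x) / 2) := by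
  have h1' : 0 < 1 - x := sub_pos.2 h1
  have h := Real.lt_log_one_add_of_pos (div_pos (mul_pos two_pos h0) h1')
  rw [logit_one_add_div_two]
  convert h using 2 <;> field_simp <;> ring

lemma logit_lt_two_mul_div {x : ℝ} (h0 : 0 < x) (h1 : x < 1) :
    logit ((1 + x) / 2) < 2 * x / (1 - x ^ 2) := by
  have h1' : 0 < 1 - x := sub_pos.2 h1
  have hz : 1 < (1 + x) / (1 - x) := by rw [one_lt_div h1']; linarith
  -- `log z < sinh (log z) = (z - z⁻¹) / 2`
  have h := Real.self_lt_sinh_iff.2 (Real.log_pos hz)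
  rw [Real.sinh_log (zero_lt_one.trans hz)] at h
  rw [logit_one_add_div_two]
  convert h using 1
  rw [show 1 - x ^ 2 = (1 + x) * (1 - x) by ring]
  field_simp
  ring

lemma continuousAt_logit {p : ℝ} (h0 : 0 < p) (h1 : p < 1) : ContinuousAt logit p := by
  have h1' : 1 - p ≠ 0 := (sub_pos.2 h1).ne'
  have hp : p / (1 - p) ≠ 0 := div_ne_zero h0.ne' h1'
  unfold logit
  fun_prop (disch := assumption)

lemma tendsto_logit_nhdsLT_one : Tendsto logit (𝓝[<] 1) atTop := by
  have hsub : Tendsto (fun p : ℝ => 1 - p) (𝓝[<] 1) (𝓝[>] 0) := by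
    refine tendsto_nhdsWithin_iff.2 ⟨?_, eventually_mem_nhdsWithin.mono fun p hp =>
      mem_Ioi.2 (sub_pos.2 hp)⟩
    have h : Tendsto (fun p : ℝ => 1 - p) (𝓝 1) (𝓝 0) :=
      Continuous.tendsto' (by fun_prop) _ _ (sub_self 1)
    exact h.mono_left nhdsWithin_le_nhds
  exact Real.tendsto_log_atTop.comp <|
    (tendsto_id.mono_left nhdsWithin_le_nhds).pos_mul_atTop one_pos <|
      tendsto_inv_nhdsGT_zero.comp hsub

/-- The excess at `s + ε` of `logit` over its tangent line at `s`. -/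
noncomputable def logitExcess (ε s : ℝ) : ℝ := logit (s + ε) - logit s - ε / (s * (1 - s))

lemma continuousAt_logitExcess {ε s : ℝ} (hε : 0 < ε) (h0 : 0 < s) (h1 : s + ε < 1) :
    ContinuousAt (logitExcess ε) s := by
  have hs : s * (1 - s) ≠ 0 := mul_ne_zero h0.ne' (by linarith)
  have h₁ : ContinuousAt (fun s => logit (s + ε)) s :=
    (continuousAt_logit (by linarith) h1).comp (f := fun s => s + ε) (by fun_prop)
  have h₂ := continuousAt_logit h0 (by linarith)
  unfold logitExcess
  fun_prop (disch := assumption)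

lemma logitExcess_one_sub_div_two_neg {ε : ℝ} (hε : 0 < ε) (hε1 : ε < 1) :
    logitExcess ε ((1 - ε) / 2) < 0 := by
  have h := logit_lt_two_mul_div hε hε1
  have hden : 1 - ε ^ 2 ≠ 0 := by nlinarith
  have hdiv : ε / ((1 - ε) / 2 * (1 - (1 - ε) / 2)) = 2 * (2 * ε / (1 - ε ^ 2)) := by
    rw [show (1 - ε) / 2 * (1 - (1 - ε) / 2) = (1 - ε ^ 2) / 4 by ring]
    field_simp
    ring
  have hlogit : logit ((1 - ε) / 2) = -logit ((1 + ε) / 2) := by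
    rw [← logit_one_sub]
    ring_nf
  rw [logitExcess, hdiv, hlogit, show (1 - ε) / 2 + ε = (1 + ε) / 2 by ring]
  linarith

lemma tendsto_logitExcess_nhdsLT_one_sub {ε : ℝ} (hε : 0 < ε) (hε1 : ε < 1) :
    Tendsto (logitExcess ε) (𝓝[<] (1 - ε)) atTop := by
  have hshift : Tendsto (fun s : ℝ => s + ε) (𝓝[<] (1 - ε)) (𝓝[<] 1) := by
    have h : Tendsto (fun s : ℝ => s + ε) (𝓝 (1 - ε)) (𝓝 1) :=
      Continuous.tendsto' (by fun_prop) _ _ (sub_add_cancel 1 ε)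
    exact tendsto_nhdsWithin_iff.2 ⟨h.mono_left nhdsWithin_le_nhds,
      eventually_mem_nhdsWithin.mono fun s hs => mem_Iio.2 (lt_sub_iff_add_lt.1 hs)⟩
  have hcont : ContinuousAt (fun s => logit s + ε / (s * (1 - s))) (1 - ε) := by
    have hs : (1 - ε) * (1 - (1 - ε)) ≠ 0 := mul_ne_zero (by linarith) (by linarith)
    have := continuousAt_logit (p := 1 - ε) (by linarith) (by linarith)
    fun_prop (disch := assumption)
  refine ((tendsto_logit_nhdsLT_one.comp hshift).atTop_add
    (hcont.neg.tendsto.mono_left nhdsWithin_le_nhds)).congr fun s => ?_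
  simp only [logitExcess, Function.comp_apply, Pi.neg_apply]
  ring

lemma exists_logitExcess_pos {ε : ℝ} (hε : 0 < ε) (hε1 : ε < 1) :
    ∃ s, (1 - ε) / 2 ≤ s ∧ s ≤ 1 / 2 ∧ s + ε < 1 ∧ 0 < logitExcess ε s := by
  rcases lt_or_ge ε (1 / 2) with h | h
  · refine ⟨1 / 2, by linarith, le_rfl, by linarith, ?_⟩
    have hlt := two_mul_lt_logit (x := 2 * ε) (by linarith) (by linarith)
    have h0 : logit (1 / 2) = 0 := by norm_num [logit]
    rw [logitExcess, h0, show 1 / 2 + ε = (1 + 2 * ε) / 2 by ring,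
      show ε / (1 / 2 * (1 - 1 / 2)) = 2 * (2 * ε) by ring]
    linarith
  · have hlarge := (tendsto_logitExcess_nhdsLT_one_sub hε hε1).eventually_gt_atTop 0
    have hmem : ∀ᶠ s in 𝓝[<] (1 - ε), s ∈ Ioo ((1 - ε) / 2) (1 - ε) :=
      Ioo_mem_nhdsLT (by linarith)
    obtain ⟨s, hpos, hs⟩ := (hlarge.and hmem).exists
    exact ⟨s, hs.1.le, by linarith [hs.2], by linarith [hs.2], hpos⟩

lemma exists_logitExcess_eq_zero {ε : ℝ} (hε : 0 < ε) (hε1 : ε < 1) :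
    ∃ s, (1 - ε) / 2 ≤ s ∧ s ≤ 1 / 2 ∧ s + ε < 1 ∧ logitExcess ε s = 0 := by
  obtain ⟨r, hr, hr2, hr1, hpos⟩ := exists_logitExcess_pos hε hε1
  have hcont : ContinuousOn (logitExcess ε) (Icc ((1 - ε) / 2) r) := fun s hs =>
    (continuousAt_logitExcess hε (by linarith [hs.1]) (by linarith [hs.2])).continuousWithinAt
  obtain ⟨s, hs, h⟩ := intermediate_value_Icc hr hcont
    ⟨(logitExcess_one_sub_div_two_neg hε hε1).le, hpos.le⟩
  exact ⟨s, hs.1, hs.2.trans hr2, by linarith [hs.2], h⟩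

end LogOdds

section BernoulliKL

lemma lt_of_hasDerivAt_pos_of_ne {f f' : ℝ → ℝ} {a b c : ℝ} (hab : a < b)
    (hf : ∀ x ∈ Icc a b, HasDerivAt f (f' x) x) (hf' : ∀ x ∈ Ioo a b, x ≠ c → 0 < f' x) :
    f a < f b := by
  have lt_of_pos {u v : ℝ} (huv : u < v) (h : Icc u v ⊆ Icc a b)
      (hpos : ∀ x ∈ Ioo u v, 0 < f' x) : f u < f v :=
    strictMonoOn_of_hasDerivWithinAt_pos (convex_Icc u v)
      (fun x hx => (hf x (h hx)).continuousAt.continuousWithinAt)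
      (fun x hx => (hf x (h (interior_subset hx))).hasDerivWithinAt)
      (fun x hx => hpos x (by rwa [interior_Icc] at hx))
      (left_mem_Icc.2 huv.le) (right_mem_Icc.2 huv.le) huv
  by_cases hc : c ∈ Ioo a b
  · calc f a < f c := lt_of_pos hc.1 (Icc_subset_Icc_right hc.2.le)
          fun x hx => hf' x ⟨hx.1, hx.2.trans hc.2⟩ hx.2.ne
      _ < f b := lt_of_pos hc.2 (Icc_subset_Icc_left hc.1.le)
          fun x hx => hf' x ⟨hc.1.trans hx.1, hx.2⟩ hx.1.ne'
  · exact lt_of_pos hab subset_rfl fun x hx => hf' x hx (by rintro rfl; exact hc hx)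

/-- The Kullback–Leibler divergence of the Bernoulli law with parameter `q` from the one with
parameter `p`. -/
noncomputable def bernoulliKL (q p : ℝ) : ℝ :=
  q * Real.log (q / p) + (1 - q) * Real.log ((1 - q) / (1 - p))

lemma bernoulliKL_one_sub (q p : ℝ) : bernoulliKL (1 - q) (1 - p) = bernoulliKL q p := by
  simp only [bernoulliKL, sub_sub_cancel]
  exact add_comm _ _

lemma hasDerivAt_bernoulliKL_sub {q x : ℝ} (hq0 : 0 < q) (hq1 : q < 1) (hx0 : 0 < x)
    (hx1 : x < 1) : HasDerivAt (fun p => bernoulliKL q p - 2 * (q - p) ^ 2)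
      ((x - q) * (1 - 2 * x) ^ 2 / (x * (1 - x))) x := by
  have hx1' : 1 - x ≠ 0 := by linarith
  have hq1' : 1 - q ≠ 0 := by linarith
  have hsub : HasDerivAt (fun p : ℝ => 1 - p) (-1) x := (hasDerivAt_id x).const_sub 1
  have hfst := ((hasDerivAt_const x q).div (hasDerivAt_id x) hx0.ne').log
    (div_ne_zero hq0.ne' hx0.ne')
  have hsnd := ((hasDerivAt_const x (1 - q)).div hsub hx1').log (div_ne_zero hq1' hx1')
  have hsq := ((hasDerivAt_id x).const_sub q).pow 2
  refine (((hfst.const_mul q).add (hsnd.const_mul (1 - q))).sub (hsq.const_mul 2)).congr_deriv ?_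
  simp only [id_eq, Pi.div_apply]
  field_simp
  ring

theorem two_mul_sub_sq_lt_bernoulliKL {q p : ℝ} (hq : q ∈ Ioo (0 : ℝ) 1) (hp : p ∈ Ioo (0 : ℝ) 1)
    (hne : q ≠ p) : 2 * (q - p) ^ 2 < bernoulliKL q p := by
  wlog hqp : q < p generalizing q p
  · have h := this (q := 1 - q) (p := 1 - p) ⟨by linarith [hq.2], by linarith [hq.1]⟩
      ⟨by linarith [hp.2], by linarith [hp.1]⟩ (by simpa using hne)
      (by linarith [lt_of_le_of_ne (not_lt.1 hqp) hne.symm])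
    rw [bernoulliKL_one_sub] at h
    linarith
  have hpos : ∀ x ∈ Ioo q p, x ≠ 1 / 2 → 0 < (x - q) * (1 - 2 * x) ^ 2 / (x * (1 - x)) := by
    intro x hx hne
    have h0 : 0 < x := hq.1.trans hx.1
    have h1 : 0 < 1 - x := sub_pos.2 (hx.2.trans hp.2)
    have h2 : 0 < x - q := sub_pos.2 hx.1
    have h3 : 1 - 2 * x ≠ 0 := by contrapose! hne; linarith
    positivity
  have h := lt_of_hasDerivAt_pos_of_ne hqp
    (fun x hx => hasDerivAt_bernoulliKL_sub hq.1 hq.2 (hq.1.trans_le hx.1) (hx.2.trans_lt hp.2))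
    hpos
  have hself : bernoulliKL q q = 0 := by
    simp [bernoulliKL, div_self hq.1.ne', div_self (sub_pos.2 hq.2).ne']
  simp only [hself, sub_self] at h
  linarith

end BernoulliKL

section CrossingExponent

/-- The mass of the atom at `0` which, added to the uniform law on `[0, 1]`, makes the normalised
sum give `[0, s]` the probability `s + ε`. -/
noncomputable def atomMass (ε s : ℝ) : ℝ := ε / (1 - (s + ε))

/-- The exponential rate of `(1 + κ / s) ^ i`, the weight by which an atom of mass `κ` at `0` tilts
the event that `i = n * (s + ε)` of `n` uniform sample points lie below `s`. -/
noncomputable def crossingExponent (κ ε s : ℝ) : ℝ := (s + ε) * Real.log (1 + κ / s)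

/-- The difference between `log (1 + κ / s)` and the multiple of `1 / (s + ε)` that agrees with it
at `s = p` when `logitExcess ε p = 0`, for `κ = atomMass ε p`. It decides whether
`crossingExponent κ ε s` is larger than its value at `p`. -/
noncomputable def crossingGap (ε p s : ℝ) : ℝ :=
  Real.log (1 + atomMass ε p / s) - (p + ε) * (ε / (p * (1 - p))) / (s + ε)

variable {ε p : ℝ}

lemma atomMass_pos (hε : 0 < ε) (hpε : p + ε < 1) : 0 < atomMass ε p :=
  div_pos hε (sub_pos.2 hpε)

lemma one_add_atomMass (hpε : p + ε < 1) : 1 + atomMass ε p = (1 - p) / (1 - (p + ε)) := by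
  have : 1 - (p + ε) ≠ 0 := (sub_pos.2 hpε).ne'
  rw [atomMass]
  field_simp
  ring

lemma log_one_add_atomMass_div (hε : 0 < ε) (hp : 0 < p) (hpε : p + ε < 1) :
    Real.log (1 + atomMass ε p / p) = logit (p + ε) - logit p := by
  have hq : 0 < 1 - (p + ε) := by linarith
  have hp' : 0 < 1 - p := by linarith
  rw [logit, logit, ← Real.log_div (by positivity) (by positivity), atomMass]
  congr 1
  field_simp
  ring

lemma crossingExponent_sub_log_eq_bernoulliKL (hε : 0 < ε) (hp : 0 < p) (hpε : p + ε < 1) :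
    crossingExponent (atomMass ε p) ε p - Real.log (1 + atomMass ε p) = bernoulliKL (p + ε) p := by
  have hp' : 0 < 1 - p := by linarith
  rw [crossingExponent, log_one_add_atomMass_div hε hp hpε, one_add_atomMass hpε, bernoulliKL,
    logit, logit, Real.log_div, Real.log_div, Real.log_div, Real.log_div, Real.log_div]
  · ring
  all_goals positivity

lemma hasDerivAt_crossingGap (hε : 0 < ε) (hp : 0 < p) (hpε : p + ε < 1) {s : ℝ} (hs : 0 < s) :
    HasDerivAt (crossingGap ε p)
      (atomMass ε p * ε / (p * (1 - p) * s * (s + atomMass ε p) * (s + ε) ^ 2) *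
        ((s - p) * (ε * (1 - p) - (2 * p + ε - 1) * s))) s := by
  have hq : 0 < 1 - (p + ε) := by linarith
  have hp' : 0 < 1 - p := by linarith
  have hκ := atomMass_pos hε hpε
  have hlog := (((hasDerivAt_const s (atomMass ε p)).div (hasDerivAt_id s) hs.ne').const_add
    1).log (by simp only [id_eq, Pi.div_apply]; positivity)
  have hdiv := (hasDerivAt_const s ((p + ε) * (ε / (p * (1 - p))))).div
    ((hasDerivAt_id s).add_const ε) (by simp only [id_eq]; positivity)
  refine (hlog.sub hdiv).congr_deriv ?_
  have : 0 < s * (1 - (p + ε)) + ε := by positivity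
  simp only [id_eq, Pi.div_apply, atomMass]
  field_simp
  ring

lemma crossingGap_le_crossingGap_of_nonneg (hε : 0 < ε) (hp : 0 < p) (hpε : p + ε < 1) {u v : ℝ}
    (hu : 0 < u) (huv : u ≤ v)
    (h : ∀ s ∈ Ioo u v, 0 ≤ (s - p) * (ε * (1 - p) - (2 * p + ε - 1) * s)) :
    crossingGap ε p u ≤ crossingGap ε p v := by
  have hp' : 0 < 1 - p := by linarith
  have hκ := atomMass_pos hε hpε
  refine monotoneOn_of_hasDerivWithinAt_nonneg (convex_Icc u v)
    (fun s hs => (hasDerivAt_crossingGap hε hp hpε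
      (hu.trans_le hs.1)).continuousAt.continuousWithinAt)
    (fun s hs => (hasDerivAt_crossingGap hε hp hpε
      (hu.trans_le (interior_subset hs).1)).hasDerivWithinAt)
    (fun s hs => ?_) (left_mem_Icc.2 huv) (right_mem_Icc.2 huv) huv
  rw [interior_Icc] at hs
  have hs0 : 0 < s := hu.trans hs.1
  exact mul_nonneg (by positivity) (h s hs)

lemma crossingGap_le_crossingGap_of_nonpos (hε : 0 < ε) (hp : 0 < p) (hpε : p + ε < 1) {u v : ℝ}
    (hu : 0 < u) (huv : u ≤ v)
    (h : ∀ s ∈ Ioo u v, (s - p) * (ε * (1 - p) - (2 * p + ε - 1) * s) ≤ 0) :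
    crossingGap ε p v ≤ crossingGap ε p u := by
  have hp' : 0 < 1 - p := by linarith
  have hκ := atomMass_pos hε hpε
  refine antitoneOn_of_hasDerivWithinAt_nonpos (convex_Icc u v)
    (fun s hs => (hasDerivAt_crossingGap hε hp hpε
      (hu.trans_le hs.1)).continuousAt.continuousWithinAt)
    (fun s hs => (hasDerivAt_crossingGap hε hp hpε
      (hu.trans_le (interior_subset hs).1)).hasDerivWithinAt)
    (fun s hs => ?_) (left_mem_Icc.2 huv) (right_mem_Icc.2 huv) huv
  rw [interior_Icc] at hs
  have hs0 : 0 < s := hu.trans hs.1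
  exact mul_nonpos_of_nonneg_of_nonpos (by positivity) (h s hs)

lemma min_zero_crossingGap_le_crossingGap (hε : 0 < ε) (hp : (1 - ε) / 2 ≤ p) (hp2 : p ≤ 1 / 2)
    (hpε : p + ε < 1) (hgap : crossingGap ε p p = 0) {s : ℝ} (hs : 0 < s) (hs1 : s ≤ 1 - ε) :
    min 0 (crossingGap ε p (1 - ε)) ≤ crossingGap ε p s := by
  have hp0 : 0 < p := by linarith
  have hfactor_p : 0 ≤ ε * (1 - p) - (2 * p + ε - 1) * p := by nlinarith
  rcases le_total s p with hsp | hps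
  · refine (min_le_left _ _).trans (hgap ▸ ?_)
    refine crossingGap_le_crossingGap_of_nonpos hε hp0 hpε hs hsp fun t ht => ?_
    exact mul_nonpos_of_nonpos_of_nonneg (by linarith [ht.2]) (by nlinarith [ht.2])
  · rcases le_total 0 (ε * (1 - p) - (2 * p + ε - 1) * s) with hfactor | hfactor
    · refine (min_le_left _ _).trans (hgap ▸ ?_)
      refine crossingGap_le_crossingGap_of_nonneg hε hp0 hpε hp0 hps fun t ht => ?_
      exact mul_nonneg (by linarith [ht.1]) (by nlinarith [ht.2])
    · refine (min_le_right _ _).trans ?_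
      refine crossingGap_le_crossingGap_of_nonpos hε hp0 hpε hs hs1 fun t ht => ?_
      exact mul_nonpos_of_nonneg_of_nonpos (by linarith [ht.1]) (by nlinarith [ht.1])

lemma crossingGap_self (hε : 0 < ε) (hp : 0 < p) (hpε : p + ε < 1) :
    crossingGap ε p p = logitExcess ε p := by
  rw [crossingGap, log_one_add_atomMass_div hε hp hpε, mul_div_cancel_left₀ _ (by linarith),
    logitExcess]

lemma min_crossingExponent_le_crossingExponent (hε : 0 < ε) (hp : (1 - ε) / 2 ≤ p)
    (hp2 : p ≤ 1 / 2) (hpε : p + ε < 1) (htangent : logitExcess ε p = 0) {s : ℝ} (hs : 0 < s)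
    (hs1 : s ≤ 1 - ε) :
    min (crossingExponent (atomMass ε p) ε p) (crossingExponent (atomMass ε p) ε (1 - ε)) ≤
      crossingExponent (atomMass ε p) ε s := by
  have hp0 : 0 < p := by linarith
  set C := (p + ε) * (ε / (p * (1 - p)))
  have hsplit : ∀ t, 0 < t → crossingExponent (atomMass ε p) ε t =
      C + (t + ε) * crossingGap ε p t := fun t ht => by
    rw [crossingExponent, crossingGap, mul_sub, mul_div_cancel₀ _ (by linarith)]
    ring
  have hgap : crossingGap ε p p = 0 := (crossingGap_self hε hp0 hpε).trans htangent
  have hmin := min_zero_crossingGap_le_crossingGap hε hp hp2 hpε hgap hs hs1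
  rw [hsplit p hp0, hsplit s hs, hsplit (1 - ε) (by linarith), hgap, min_add_add_left, mul_zero,
    sub_add_cancel, one_mul]
  have hle : min 0 (crossingGap ε p (1 - ε)) ≤ (s + ε) * min 0 (crossingGap ε p (1 - ε)) := by
    nlinarith [min_le_left 0 (crossingGap ε p (1 - ε))]
  linarith [mul_le_mul_of_nonneg_left hmin (by linarith : 0 ≤ s + ε)]

lemma two_mul_sq_lt_crossingExponent_one_sub_sub_log (hε : 0 < ε) (hp : (1 - ε) / 2 ≤ p)
    (hpε : p + ε < 1) :
    2 * ε ^ 2 < crossingExponent (atomMass ε p) ε (1 - ε) - Real.log (1 + atomMass ε p) := by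
  have hq : 0 < 1 - (p + ε) := by linarith
  have hε' : 0 < 1 - ε := by linarith
  have hκ := atomMass_pos hε hpε
  have hε2 : ε ^ 2 < 1 := by nlinarith
  calc 2 * ε ^ 2 < Real.log ((1 + ε ^ 2) / (1 - ε ^ 2)) :=
        logit_one_add_div_two ▸ two_mul_lt_logit (by positivity) hε2
    _ ≤ Real.log ((1 + atomMass ε p / (1 - ε)) / (1 + atomMass ε p)) := by
        refine Real.log_le_log (div_pos (by positivity) (by linarith)) ?_
        have hp' : 2 * ε ^ 2 * (1 - p) ≤ ε ^ 2 * (1 + ε) := by nlinarith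
        rw [div_le_div_iff₀ (by linarith) (by positivity), one_add_atomMass hpε, atomMass]
        field_simp
        linear_combination (1 - ε) * hp'
    _ = _ := by
        rw [Real.log_div (by positivity) (by positivity), crossingExponent, sub_add_cancel, one_mul]

theorem exists_two_mul_sq_lt_and_add_log_le_crossingExponent (hε : 0 < ε) (hε1 : ε < 1) :
    ∃ κ r : ℝ, 0 < κ ∧ 2 * ε ^ 2 < r ∧
      ∀ s, 0 < s → s ≤ 1 - ε → r + Real.log (1 + κ) ≤ crossingExponent κ ε s := by
  obtain ⟨p, hp, hp2, hpε, htangent⟩ := exists_logitExcess_eq_zero hε hε1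
  have hp0 : 0 < p := by linarith
  refine ⟨atomMass ε p, min (crossingExponent (atomMass ε p) ε p)
    (crossingExponent (atomMass ε p) ε (1 - ε)) - Real.log (1 + atomMass ε p),
    atomMass_pos hε hpε, ?_, fun s hs hs1 => ?_⟩
  · rw [← min_sub_sub_right, crossingExponent_sub_log_eq_bernoulliKL hε hp0 hpε, lt_min_iff]
    refine ⟨?_, two_mul_sq_lt_crossingExponent_one_sub_sub_log hε hp hpε⟩
    have h := two_mul_sub_sq_lt_bernoulliKL (q := p + ε) (p := p) ⟨by linarith, hpε⟩
      ⟨hp0, by linarith⟩ (by linarith)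
    rwa [add_sub_cancel_left] at h
  · rw [sub_add_cancel]
    exact min_crossingExponent_le_crossingExponent hε hp hp2 hpε htangent hs hs1

end CrossingExponent

section Tilting

open scoped ENNReal NNReal

variable {ι E : Type*} [Fintype ι]

lemma pi_withDensity {α : ι → Type*} [∀ i, MeasurableSpace (α i)] (μ : ∀ i, Measure (α i))
    [∀ i, IsProbabilityMeasure (μ i)] {g : ∀ i, α i → ℝ≥0∞} (hg : ∀ i, Measurable (g i))
    [∀ i, SigmaFinite ((μ i).withDensity (g i))] :
    Measure.pi (fun i => (μ i).withDensity (g i)) =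
      (Measure.pi μ).withDensity fun x => ∏ i, g i (x i) := by
  refine Measure.pi_eq fun t ht => ?_
  have hprod (x : ∀ i, α i) : (univ.pi t).indicator (fun x => ∏ i, g i (x i)) x =
      ∏ i, (t i).indicator (g i) (x i) := by
    by_cases hx : x ∈ univ.pi t
    · rw [indicator_of_mem hx]
      exact Finset.prod_congr rfl fun i _ => (indicator_of_mem (hx i trivial) _).symm
    · obtain ⟨i, hi⟩ : ∃ i, x i ∉ t i := by simpa [mem_univ_pi] using hx
      rw [indicator_of_notMem hx,
        Finset.prod_eq_zero (Finset.mem_univ i) (indicator_of_notMem hi _)]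
  have hmeas (i : ι) : Measurable ((t i).indicator (g i)) := (hg i).indicator (ht i)
  have hind := ProbabilityTheory.iIndepFun_pi fun i => (hmeas i).aemeasurable (μ := μ i)
  rw [withDensity_apply _ (.univ_pi ht), ← lintegral_indicator (.univ_pi ht)]
  simp_rw [hprod]
  rw [ProbabilityTheory.lintegral_prod_eq_prod_lintegral_of_indepFun Finset.univ _ hind
    fun i => (hmeas i).comp (measurable_pi_apply i)]
  refine Finset.prod_congr rfl fun i _ => ?_
  rw [(measurePreserving_eval μ i).lintegral_comp (hmeas i), lintegral_indicator (ht i),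
    withDensity_apply _ (ht i)]

/-- The number of entries of the sample `x` that lie in `S`. -/
noncomputable def countIn (S : Set E) (x : ι → E) : ℕ := ∑ j, S.indicator 1 (x j)

lemma countIn_mono {S S' : Set E} (h : S ⊆ S') (x : ι → E) : countIn S x ≤ countIn S' x :=
  Finset.sum_le_sum fun _ _ => indicator_le_indicator_of_subset h (fun _ => zero_le_one) _

lemma countIn_le_card (S : Set E) (x : ι → E) : countIn S x ≤ Fintype.card ι := by
  classical
  rw [← Finset.card_univ, countIn]
  simp only [indicator_apply, Pi.one_apply, ← Finset.card_filter]
  exact Finset.card_filter_le _ _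

/-- The map sending all of `S` to the point `a` and fixing everything else. -/
noncomputable def collapse (S : Set E) (a : E) : E → E :=
  open Classical in S.piecewise (fun _ => a) id

lemma collapse_mem_iff {S T : Set E} {a : E} (ha : a ∈ S) (h : S ⊆ T) (y : E) :
    collapse S a y ∈ T ↔ y ∈ T := by
  by_cases hy : y ∈ S
  · simp [collapse, hy, h hy, h ha]
  · simp [collapse, hy]

lemma countIn_collapse_comp {S T : Set E} {a : E} (ha : a ∈ S) (h : S ⊆ T) (x : ι → E) :
    countIn T (fun j => collapse S a (x j)) = countIn T x :=
  Finset.sum_congr rfl fun j _ =>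
    indicator_eq_indicator (collapse_mem_iff ha h (x j)) rfl

variable [MeasurableSpace E]

lemma measurable_countIn {S : Set E} (hS : MeasurableSet S) :
    Measurable (countIn S : (ι → E) → ℕ) :=
  Finset.measurable_sum _ fun j _ => (measurable_one.indicator hS).comp (measurable_pi_apply j)

lemma measurable_collapse {S : Set E} (hS : MeasurableSet S) (a : E) :
    Measurable (collapse S a) :=
  Measurable.piecewise hS measurable_const measurable_id

lemma map_collapse {S : Set E} (hS : MeasurableSet S) (a : E) (μ : Measure E) :
    μ.map (collapse S a) = μ S • Measure.dirac a + μ.restrict Sᶜ := by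
  classical
  ext t ht
  rw [Measure.map_apply (measurable_collapse hS a) ht, collapse, piecewise_preimage, Set.ite,
    measure_union (disjoint_sdiff_right.mono_left inter_subset_right) ((measurable_id ht).diff hS)]
  by_cases hat : a ∈ t <;> simp [hat, ht, Measure.restrict_apply, sdiff_eq]

lemma map_collapse_add_smul_dirac {S : Set E} (hS : MeasurableSet S) {a : E} (ha : a ∈ S)
    {μ : Measure E} [IsFiniteMeasure μ] (hμ : μ S ≠ 0) (κ : ℝ≥0) :
    (μ + κ • Measure.dirac a).map (collapse S a) =
      (μ.map (collapse S a)).withDensity fun y => (1 + κ / μ S) ^ S.indicator (1 : E → ℕ) y := by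
  have hdensity : (fun y => (1 + κ / μ S) ^ S.indicator (1 : E → ℕ) y) =
      1 + S.indicator fun _ => κ / μ S := by
    ext y
    by_cases hy : y ∈ S <;> simp [hy]
  have hrestrict : (μ.map (collapse S a)).restrict S = μ S • Measure.dirac a := by
    classical
    rw [map_collapse hS, Measure.restrict_add, Measure.restrict_smul, restrict_dirac' hS,
      if_pos ha, Measure.restrict_restrict hS, inter_compl_self, Measure.restrict_empty, add_zero]
  have hdirac : (Measure.dirac a).map (collapse S a) = Measure.dirac a := by
    rw [Measure.map_dirac' (measurable_collapse hS a)]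
    simp [collapse, ha]
  rw [hdensity, withDensity_add_left measurable_one, withDensity_one, withDensity_indicator hS,
    withDensity_const, hrestrict, smul_smul, ENNReal.div_mul_cancel hμ (measure_ne_top μ S),
    Measure.map_add _ _ (measurable_collapse hS a), Measure.map_smul, hdirac]
  rfl

-- Collapsing `S` to the point `a` does not affect `A`, and on collapsed laws adding an atom at `a`
-- is a mere change of density.
theorem pi_add_smul_dirac_apply {S : Set E} (hS : MeasurableSet S) {a : E} (ha : a ∈ S)
    {μ : Measure E} [IsProbabilityMeasure μ] (hμ : μ S ≠ 0) (κ : ℝ≥0) {A : Set (ι → E)}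
    (hA : MeasurableSet A) {k : ℕ} (hcount : ∀ x ∈ A, countIn S x = k)
    (hcollapse : (fun x j => collapse S a (x j)) ⁻¹' A = A) :
    Measure.pi (fun _ => μ + κ • Measure.dirac a) A =
      (1 + κ / μ S) ^ k * Measure.pi (fun _ => μ) A := by
  have hmeas := measurable_collapse hS a
  have pi_map_apply (ν : Measure E) [IsFiniteMeasure ν] :
      Measure.pi (fun _ => ν) A = Measure.pi (fun _ => ν.map (collapse S a)) A := by
    rw [← Measure.pi_map_pi fun _ => hmeas.aemeasurable, Measure.map_apply (by fun_prop) hA,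
      hcollapse]
  have : IsProbabilityMeasure (μ.map (collapse S a)) :=
    Measure.isProbabilityMeasure_map hmeas.aemeasurable
  have hmap := map_collapse_add_smul_dirac hS ha hμ κ
  have : SigmaFinite ((μ.map (collapse S a)).withDensity
      fun y => (1 + κ / μ S) ^ S.indicator (1 : E → ℕ) y) := hmap ▸ inferInstance
  rw [pi_map_apply, hmap, pi_withDensity _ fun _ => by fun_prop, withDensity_apply _ hA,
    pi_map_apply μ, ← setLIntegral_const]
  refine setLIntegral_congr_fun hA fun x hx => ?_
  rw [Finset.prod_pow_eq_pow_sum, ← hcount x hx, countIn]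

end Tilting

section BoundaryCrossing

open scoped ENNReal NNReal

variable {n : ℕ} {s : Fin n → ℝ}

lemma monotone_sortedVec (x : Fin n → ℝ) : Monotone (sortedVec x) := Tuple.monotone_sort x

lemma lt_countIn_Iio_iff (x : Fin n → ℝ) (i : Fin n) (t : ℝ) :
    (i : ℕ) < countIn (Iio t) x ↔ sortedVec x i < t := by
  rw [← Tuple.lt_card_lt_iff_apply_lt_of_monotone (monotone_sortedVec x), Finset.card_filter,
    countIn, ← Equiv.sum_comp (Tuple.sort x)]
  simp only [sortedVec, Function.comp_apply, indicator_apply, mem_Iio, Pi.one_apply]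
  congr!

lemma measurable_sortedVec (i : Fin n) : Measurable fun x : Fin n → ℝ => sortedVec x i := by
  refine measurable_of_Iio fun t => ?_
  simp only [preimage, mem_Iio, ← lt_countIn_Iio_iff]
  exact measurableSet_lt measurable_const (measurable_countIn measurableSet_Iio)

/-- The samples whose order statistics fall below the boundary `s` for the last time at index `i`,
where exactly `i + 1` sample points lie below `s i`. -/
def lastCrossing (s : Fin n → ℝ) (i : Fin n) : Set (Fin n → ℝ) :=
  {x | countIn (Iio (s i)) x = i + 1 ∧ ∀ k, i < k → countIn (Iio (s k)) x ≤ k}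

lemma measurableSet_lastCrossing (s : Fin n → ℝ) (i : Fin n) :
    MeasurableSet (lastCrossing s i) := by
  have hinter : lastCrossing s i = countIn (Iio (s i)) ⁻¹' {(i : ℕ) + 1} ∩
      ⋂ k, ⋂ _ : i < k, countIn (Iio (s k)) ⁻¹' Iic (k : ℕ) := by
    ext x
    simp [lastCrossing]
  have hcount (k : Fin n) := measurable_countIn (ι := Fin n) (measurableSet_Iio (a := s k))
  rw [hinter]
  exact (hcount i (.singleton _)).inter <|
    .iInter fun k => .iInter fun _ => hcount k measurableSet_Iic

lemma pairwise_disjoint_lastCrossing (s : Fin n → ℝ) :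
    Pairwise (Function.onFun Disjoint (lastCrossing s)) := by
  refine (pairwise_disjoint_on _).2 fun i k hik => ?_
  exact disjoint_left.2 fun x hi hk => by have := hi.2 k hik; have := hk.1; omega

lemma exists_mem_lastCrossing (hs : Monotone s) {x : Fin n → ℝ} (h : ∃ i, sortedVec x i < s i) :
    ∃ i, x ∈ lastCrossing s i := by
  obtain ⟨i, hi, hmax⟩ := exists_max_image {i | sortedVec x i < s i} id (toFinite _) h
  have hlater (k : Fin n) (hik : i < k) : countIn (Iio (s k)) x ≤ k := by
    by_contra! hk
    exact hik.not_ge (hmax k ((lt_countIn_Iio_iff x k _).1 hk))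
  refine ⟨i, le_antisymm ?_ ((lt_countIn_Iio_iff x i _).2 hi), hlater⟩
  by_contra! hi1
  have hin : (i : ℕ) + 1 < n := hi1.trans_le (by simpa using countIn_le_card (Iio (s i)) x)
  have hnext := hlater ⟨i + 1, hin⟩ (Nat.lt_succ_self i)
  have hmono := countIn_mono (Iio_subset_Iio (hs (show i ≤ ⟨i + 1, hin⟩ from Nat.le_succ i))) x
  exact (hi1.trans_le hmono).not_ge hnext

lemma preimage_collapse_lastCrossing (hs : Monotone s) {i : Fin n} {a : ℝ} (ha : a < s i) :
    (fun x j => collapse (Iio (s i)) a (x j)) ⁻¹' lastCrossing s i = lastCrossing s i := by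
  have hcount (k : Fin n) (hik : i ≤ k) (x : Fin n → ℝ) :
      countIn (Iio (s k)) (fun j => collapse (Iio (s i)) a (x j)) = countIn (Iio (s k)) x :=
    countIn_collapse_comp (mem_Iio.2 ha) (Iio_subset_Iio (hs hik)) x
  ext x
  simp only [lastCrossing, mem_preimage, mem_ofPred_eq, hcount i le_rfl]
  exact and_congr_right fun _ => forall₂_congr fun k hik => by rw [hcount k hik.le]

lemma pi_lastCrossing_eq_zero {μ : Measure ℝ} [IsProbabilityMeasure μ] {i : Fin n}
    (hμ : μ (Iio (s i)) = 0) : Measure.pi (fun _ => μ) (lastCrossing s i) = 0 := by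
  have hae : ∀ᵐ x ∂Measure.pi fun _ : Fin n => μ, ∀ j, x j ∉ Iio (s i) :=
    ae_all_iff.2 fun j =>
      Measure.tendsto_eval_ae_ae.eventually (measure_eq_zero_iff_ae_notMem.1 hμ)
  refine measure_eq_zero_iff_ae_notMem.2 (hae.mono fun x hnot hx => ?_)
  have hzero : countIn (Iio (s i)) x = 0 :=
    Finset.sum_eq_zero fun j _ => indicator_of_notMem (hnot j) _
  exact absurd hx.1 (by omega)

theorem mul_pi_exists_sortedVec_lt_le (hs : Monotone s) {μ : Measure ℝ} [IsProbabilityMeasure μ]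
    {a : ℝ} {κ : ℝ≥0} {M : ℝ≥0∞} (h : ∀ i, μ (Iio (s i)) ≠ 0 →
      a < s i ∧ M ≤ (1 + κ / μ (Iio (s i))) ^ ((i : ℕ) + 1)) :
    M * Measure.pi (fun _ => μ) {x | ∃ i, sortedVec x i < s i} ≤ (1 + κ) ^ n := by
  have htilt (i : Fin n) : M * Measure.pi (fun _ => μ) (lastCrossing s i) ≤
      Measure.pi (fun _ => μ + κ • Measure.dirac a) (lastCrossing s i) := by
    by_cases hμ : μ (Iio (s i)) = 0
    · simp [pi_lastCrossing_eq_zero hμ]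
    · rw [pi_add_smul_dirac_apply measurableSet_Iio (h i hμ).1 hμ κ
        (measurableSet_lastCrossing s i) (fun x hx => hx.1)
        (preimage_collapse_lastCrossing hs (h i hμ).1)]
      gcongr
      exact (h i hμ).2
  calc M * Measure.pi (fun _ => μ) {x | ∃ i, sortedVec x i < s i}
      ≤ M * ∑ i, Measure.pi (fun _ => μ) (lastCrossing s i) := by
        gcongr
        refine (measure_mono fun x hx => ?_).trans (measure_iUnion_fintype_le _ _)
        exact mem_iUnion.2 (exists_mem_lastCrossing hs hx)
    _ ≤ ∑ i, Measure.pi (fun _ => μ + κ • Measure.dirac a) (lastCrossing s i) := by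
        rw [Finset.mul_sum]
        exact Finset.sum_le_sum fun i _ => htilt i
    _ = Measure.pi (fun _ => μ + κ • Measure.dirac a) (⋃ i, lastCrossing s i) := by
        rw [measure_iUnion (pairwise_disjoint_lastCrossing s) (measurableSet_lastCrossing s),
          tsum_fintype]
    _ ≤ (1 + κ) ^ n := by
        refine (measure_mono (subset_univ _)).trans ?_
        simp [Measure.pi_univ]

end BoundaryCrossing

section SmirnovBand

open scoped ENNReal NNReal

variable {n : ℕ} {ε : ℝ}

instance isProbabilityMeasure_unif01 : IsProbabilityMeasure unif01 := ⟨by simp [unif01]⟩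

instance isProbabilityMeasure_unifPi (n : ℕ) : IsProbabilityMeasure (unifPi n) := by
  unfold unifPi
  infer_instance

lemma unif01_Iio {s : ℝ} (hs : s ≤ 1) : unif01 (Iio s) = ENNReal.ofReal s := by
  have hinter : Iio s ∩ Icc 0 1 = Ico 0 s := by
    ext t
    simp only [mem_inter_iff, mem_Iio, mem_Icc, mem_Ico]
    grind
  rw [unif01, Measure.restrict_apply measurableSet_Iio, hinter, Real.volume_Ico, sub_zero]

lemma ae_unifPi_mem_Ico (n : ℕ) : ∀ᵐ u ∂unifPi n, ∀ i, u i ∈ Ico 0 1 := by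
  have h : ∀ᵐ t ∂unif01, t ∈ Ico (0 : ℝ) 1 := by
    rw [unif01, Measure.restrict_congr_set Ico_ae_eq_Icc.symm]
    exact ae_restrict_mem measurableSet_Ico
  exact ae_all_iff.2 fun i => Measure.tendsto_eval_ae_ae.eventually h

/-- The samples whose order statistics satisfy `u_(i) ≥ i / n - β` for `1 ≤ i ≤ n`, i.e. whose
one-sided Kolmogorov–Smirnov statistic is at most `β`. The index `i : Fin n` starts at `0`. -/
def smirnovBand (n : ℕ) (β : ℝ) : Set (Fin n → ℝ) :=
  {u | ∀ i : Fin n, ((i : ℕ) + 1) / n - β ≤ sortedVec u i}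

lemma measurableSet_smirnovBand (n : ℕ) (β : ℝ) : MeasurableSet (smirnovBand n β) := by
  simp only [smirnovBand, ofPred_forall]
  exact .iInter fun i => measurableSet_le measurable_const (measurable_sortedVec i)

lemma compl_smirnovBand (n : ℕ) (β : ℝ) :
    (smirnovBand n β)ᶜ = {u | ∃ i : Fin n, sortedVec u i < ((i : ℕ) + 1) / n - β} := by
  ext u
  simp only [smirnovBand, mem_compl_iff, mem_ofPred_eq, not_forall, not_le]

lemma ofReal_exp_le_one_add_div_pow {κ : ℝ≥0} {s c : ℝ} {k : ℕ} (hs : 0 < s)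
    (h : c ≤ k * Real.log (1 + κ / s)) :
    ENNReal.ofReal (Real.exp c) ≤ (1 + κ / ENNReal.ofReal s) ^ k := by
  have hpos : 0 < 1 + κ / s := by positivity
  have hcoe : 1 + κ / ENNReal.ofReal s = ENNReal.ofReal (1 + κ / s) := by
    rw [ENNReal.ofReal_add zero_le_one (by positivity), ENNReal.ofReal_div_of_pos hs,
      ENNReal.ofReal_one, ENNReal.ofReal_coe_nnreal]
  rw [hcoe, ← ENNReal.ofReal_pow hpos.le]
  refine ENNReal.ofReal_le_ofReal ((Real.exp_le_exp.2 h).trans_eq ?_)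
  rw [Real.exp_nat_mul, Real.exp_log hpos]

lemma ofReal_exp_mul_unifPi_compl_smirnovBand_le {κ : ℝ≥0} {c : ℝ} (hε : 0 ≤ ε)
    (h : ∀ s, 0 < s → s ≤ 1 - ε → c ≤ crossingExponent κ ε s) :
    ENNReal.ofReal (Real.exp (n * c)) * unifPi n (smirnovBand n ε)ᶜ ≤ (1 + κ) ^ n := by
  have hmono : Monotone fun i : Fin n => ((i : ℕ) + 1 : ℝ) / n - ε := fun i j hij => by
    have : (i : ℕ) ≤ j := hij
    dsimp only
    gcongr
  rw [compl_smirnovBand]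
  refine mul_pi_exists_sortedVec_lt_le hmono (a := 0) fun i hi => ?_
  have hn : (0 : ℝ) < n := by exact_mod_cast i.pos
  have hs1 : ((i : ℕ) + 1 : ℝ) / n - ε ≤ 1 - ε := by
    gcongr
    exact div_le_one_of_le₀ (by exact_mod_cast i.isLt) hn.le
  rw [unif01_Iio (by linarith)] at hi ⊢
  have hs : 0 < ((i : ℕ) + 1 : ℝ) / n - ε := by simpa using hi
  refine ⟨hs, ofReal_exp_le_one_add_div_pow hs ?_⟩
  have hexp := mul_le_mul_of_nonneg_left (h _ hs hs1) hn.le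
  rw [crossingExponent, sub_add_cancel, ← mul_assoc, mul_div_cancel₀ _ hn.ne'] at hexp
  exact_mod_cast hexp

lemma unifPi_compl_smirnovBand_le_exp {κ : ℝ≥0} {r : ℝ} (hε : 0 ≤ ε)
    (h : ∀ s, 0 < s → s ≤ 1 - ε → r + Real.log (1 + κ) ≤ crossingExponent κ ε s) :
    (unifPi n).real (smirnovBand n ε)ᶜ ≤ Real.exp (-(n * r)) := by
  have hκ : (0 : ℝ) < 1 + κ := by positivity
  have hmass : Real.exp (n * Real.log (1 + κ)) = (1 + κ) ^ n := by
    rw [Real.exp_nat_mul, Real.exp_log hκ]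
  have hbound := ENNReal.toReal_mono (by finiteness)
    (ofReal_exp_mul_unifPi_compl_smirnovBand_le (n := n) hε h)
  rw [ENNReal.toReal_mul, ENNReal.toReal_ofReal (Real.exp_pos _).le, ← measureReal_def,
    ENNReal.toReal_pow, ENNReal.toReal_add ENNReal.one_ne_top ENNReal.coe_ne_top,
    ENNReal.toReal_one, ENNReal.coe_toReal, ← hmass, mul_add, Real.exp_add, mul_right_comm]
    at hbound
  rw [Real.exp_neg, ← one_div, le_div_iff₀' (Real.exp_pos _)]
  exact le_of_mul_le_mul_right (hbound.trans_eq (one_mul _).symm) (Real.exp_pos _)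

lemma unifPi_compl_smirnovBand_eq_zero (hε : 1 ≤ ε) : unifPi n (smirnovBand n ε)ᶜ = 0 := by
  refine measure_eq_zero_iff_ae_notMem.2 ((ae_unifPi_mem_Ico n).mono fun u hu => ?_)
  rw [notMem_compl_iff]
  intro i
  have hi : ((i : ℕ) + 1 : ℝ) / n ≤ 1 :=
    div_le_one_of_le₀ (by exact_mod_cast i.isLt) n.cast_nonneg
  have := (hu (Tuple.sort u i)).1
  rw [sortedVec, Function.comp_apply]
  linarith

lemma unifPi_smirnovBand_eq_zero (hn : n ≠ 0) {β : ℝ} (hβ : β ≤ 0) :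
    unifPi n (smirnovBand n β) = 0 := by
  refine measure_eq_zero_iff_ae_notMem.2 ((ae_unifPi_mem_Ico n).mono fun u hu hband => ?_)
  obtain ⟨m, rfl⟩ := Nat.exists_eq_succ_of_ne_zero hn
  have hlast := hband (Fin.last m)
  have := (hu (Tuple.sort u (Fin.last m))).2
  rw [sortedVec, Function.comp_apply, Fin.val_last, ← Nat.cast_succ,
    div_self (Nat.cast_ne_zero.2 hn)] at hlast
  linarith

theorem unifPi_compl_smirnovBand_lt_exp (n : ℕ) (hε : 0 < ε) :
    (unifPi n).real (smirnovBand n ε)ᶜ < Real.exp (-(2 * n * ε ^ 2)) := by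
  rcases Nat.eq_zero_or_pos n with rfl | hn
  · simp [compl_smirnovBand]
  rcases lt_or_ge ε 1 with hε1 | hε1
  · obtain ⟨κ, r, hκ, hr, h⟩ := exists_two_mul_sq_lt_and_add_log_le_crossingExponent hε hε1
    lift κ to ℝ≥0 using hκ.le
    refine (unifPi_compl_smirnovBand_le_exp hε.le h).trans_lt (Real.exp_lt_exp.2 ?_)
    have hn' : (0 : ℝ) < n := Nat.cast_pos.2 hn
    nlinarith
  · rw [measureReal_def, unifPi_compl_smirnovBand_eq_zero hε1]
    exact Real.exp_pos _

lemma lt_sqrt_log_div_of_unifPi_smirnovBand_eq {α β : ℝ} (hα : α ∈ Ioo 0 1) (hβ : 0 < β)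
    (hn : n ≠ 0) (hband : unifPi n (smirnovBand n β) = ENNReal.ofReal (1 - α)) :
    β < Real.sqrt (Real.log (1 / α) / (2 * n)) := by
  have hlt := unifPi_compl_smirnovBand_lt_exp n hβ
  rw [probReal_compl_eq_one_sub (measurableSet_smirnovBand n β), measureReal_def, hband,
    ENNReal.toReal_ofReal (sub_pos.2 hα.2).le, sub_sub_cancel] at hlt
  refine Real.lt_sqrt_of_sq_lt ?_
  rw [lt_div_iff₀ (by positivity), one_div, Real.log_inv]
  linarith [(Real.log_lt_iff_lt_exp hα.1).2 hlt]

end SmirnovBand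

section InducedMean

variable {n : ℕ} {a s : ℝ} {x u v : Fin n → ℝ}

/-- The spacing `x_(i+1) - x_(i)` of the order statistics of `x`, with `x_(n+1) := s`. -/
noncomputable def spacing (s : ℝ) (x : Fin n → ℝ) (i : Fin n) : ℝ :=
  (Fin.snoc (sortedVec x) s : Fin (n + 1) → ℝ) i.succ - sortedVec x i

lemma inducedMean_eq_sub_sum_spacing (s : ℝ) (x u : Fin n → ℝ) :
    inducedMean s x u = s - ∑ i, sortedVec u i * spacing s x i := rfl

lemma spacing_nonneg (hx : ∀ i, x i ≤ s) (i : Fin n) : 0 ≤ spacing s x i := by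
  rw [spacing, sub_nonneg]
  rcases Fin.eq_castSucc_or_eq_last i.succ with ⟨j, hj⟩ | hlast
  · rw [hj, Fin.snoc_castSucc]
    exact monotone_sortedVec x (Fin.castSucc_le_castSucc_iff.1 (hj ▸ i.castSucc_lt_succ.le))
  · rw [hlast, Fin.snoc_last]
    exact hx _

lemma sum_spacing_le (hs : a ≤ s) (hx : ∀ i, a ≤ x i) : ∑ i, spacing s x i ≤ s - a := by
  set y : Fin (n + 1) → ℝ := Fin.snoc (sortedVec x) s
  have htelescope := (Fin.sum_univ_succ y).symm.trans (Fin.sum_univ_castSucc y)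
  have hfirst : a ≤ y 0 := by
    rcases Fin.eq_castSucc_or_eq_last (0 : Fin (n + 1)) with ⟨j, hj⟩ | hlast
    · simp only [hj, y, Fin.snoc_castSucc]
      exact hx _
    · simpa only [hlast, y, Fin.snoc_last] using hs
  simp only [spacing, Finset.sum_sub_distrib]
  simp only [y, Fin.snoc_castSucc, Fin.snoc_last] at htelescope hfirst ⊢
  linarith

lemma sum_mul_spacing (s : ℝ) (x : Fin n → ℝ) :
    ∑ i : Fin n, ((i : ℕ) + 1) * spacing s x i = n * s - ∑ i, x i := by
  set y : Fin (n + 1) → ℝ := Fin.snoc (sortedVec x) s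
  have htelescope := (Fin.sum_univ_succ fun j => (j : ℕ) * y j).symm.trans
    (Fin.sum_univ_castSucc fun j => (j : ℕ) * y j)
  have hperm : ∑ i, sortedVec x i = ∑ i, x i := Equiv.sum_comp (Tuple.sort x) x
  simp only [spacing, mul_sub, Finset.sum_sub_distrib, add_one_mul, Finset.sum_add_distrib]
  simp only [y, Fin.snoc_castSucc, Fin.snoc_last, Fin.val_zero, Fin.val_succ, Fin.val_castSucc,
    Fin.val_last, Nat.cast_zero, zero_mul, zero_add, Nat.cast_add, Nat.cast_one, add_one_mul,
    Finset.sum_add_distrib] at htelescope ⊢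
  linarith

lemma inducedMean_anti (hx : ∀ i, x i ≤ s) (huv : ∀ i, sortedVec u i ≤ sortedVec v i) :
    inducedMean s x v ≤ inducedMean s x u :=
  sub_le_sub_left (Finset.sum_le_sum fun i _ =>
    mul_le_mul_of_nonneg_right (huv i) (spacing_nonneg hx i)) s

lemma inducedMean_le (hx : ∀ i, x i ≤ s) (hu : ∀ i, 0 ≤ u i) : inducedMean s x u ≤ s :=
  sub_le_self s <| Finset.sum_nonneg fun i _ => mul_nonneg (hu _) (spacing_nonneg hx i)

lemma le_inducedMean (hs : a ≤ s) (hx : ∀ i, x i ∈ Icc a s) (hu : ∀ i, u i ≤ 1) :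
    a ≤ inducedMean s x u := by
  have hle : ∑ i, sortedVec u i * spacing s x i ≤ ∑ i, spacing s x i :=
    Finset.sum_le_sum fun i _ => mul_le_of_le_one_left (spacing_nonneg (fun j => (hx j).2) i) (hu _)
  rw [inducedMean_eq_sub_sum_spacing]
  linarith [sum_spacing_le hs fun i => (hx i).1]

lemma inducedMean_le_mean_add (hn : n ≠ 0) {β : ℝ} (hβ : 0 ≤ β) (hx : ∀ i, x i ∈ Icc a s)
    (hu : u ∈ smirnovBand n β) : inducedMean s x u ≤ (∑ i, x i) / n + (s - a) * β := by
  have hs : a ≤ s := (hx ⟨0, Nat.pos_of_ne_zero hn⟩).1.trans (hx _).2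
  have hlower : ∑ i : Fin n, (((i : ℕ) + 1) / n - β) * spacing s x i ≤
      ∑ i, sortedVec u i * spacing s x i := Finset.sum_le_sum fun i _ =>
    mul_le_mul_of_nonneg_right (hu i) (spacing_nonneg (fun j => (hx j).2) i)
  have hsum : ∑ i : Fin n, (((i : ℕ) + 1) / n - β) * spacing s x i =
      s - (∑ i, x i) / n - β * ∑ i, spacing s x i := by
    simp only [sub_mul, Finset.sum_sub_distrib, div_mul_eq_mul_div, ← Finset.sum_div,
      sum_mul_spacing, ← Finset.mul_sum]
    rw [sub_div, mul_div_cancel_left₀ _ (Nat.cast_ne_zero.2 hn)]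
  have hrange := mul_le_mul_of_nonneg_left (sum_spacing_le hs fun i => (hx i).1) hβ
  rw [inducedMean_eq_sub_sum_spacing]
  linarith

end InducedMean

section UpperConfidenceBound

variable {n : ℕ} {D : Set ℝ} {α : ℝ} {x u ℓ : Fin n → ℝ}

lemma inducedMean_le_bfun (hD : BddAbove D) (T : (Fin n → ℝ) → ℝ) (hx : ∀ i, x i ∈ D)
    (hu : ∀ i, 0 ≤ u i) : inducedMean (sSup D) x u ≤ bfun D T x u := by
  refine le_csSup ⟨sSup D, forall_mem_image.2 fun z hz => ?_⟩ (mem_image_of_mem _ ⟨hx, le_rfl⟩)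
  exact inducedMean_le (fun i => le_csSup hD (hz.1 i)) hu

lemma bfun_inducedMean_le (hD : BddAbove D) (hx : ∀ i, x i ∈ D)
    (hu : ∀ i, sortedVec ℓ i ≤ sortedVec u i) :
    bfun D (fun y => inducedMean (sSup D) y ℓ) x u ≤ inducedMean (sSup D) x ℓ := by
  refine csSup_le (Nonempty.image _ ⟨x, hx, le_rfl⟩) (forall_mem_image.2 fun z hz => ?_)
  exact (inducedMean_anti (fun i => le_csSup hD (hz.1 i)) hu).trans hz.2

lemma bddBelow_ofReal_le_unifPi_bfun_le (hD : BddAbove D) (T : (Fin n → ℝ) → ℝ)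
    (hx : ∀ i, x i ∈ D) (hα : α < 1) :
    BddBelow {y | ENNReal.ofReal (1 - α) ≤ unifPi n {u | bfun D T x u ≤ y}} := by
  obtain ⟨a, ha⟩ := ((finite_range x).insert (sSup D)).bddBelow
  refine ⟨a, fun y hy => ?_⟩
  by_contra! hya
  have hnull : unifPi n {u | bfun D T x u ≤ y} = 0 := by
    refine measure_eq_zero_iff_ae_notMem.2 ((ae_unifPi_mem_Ico n).mono fun u hu hbfun => ?_)
    have ha_le := le_inducedMean (ha (mem_insert _ _))
      (fun i => ⟨ha (mem_insert_of_mem _ (mem_range_self i)), le_csSup hD (hx i)⟩)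
      fun i => (hu i).2.le
    exact (ha_le.trans (inducedMean_le_bfun hD T hx fun i => (hu i).1)).not_gt
      (lt_of_le_of_lt hbfun hya)
  have hpos : 0 < unifPi n {u | bfun D T x u ≤ y} :=
    (ENNReal.ofReal_pos.2 (sub_pos.2 hα)).trans_le hy
  exact hpos.ne' hnull

theorem ucb_inducedMean_le (hD : BddAbove D) (hx : ∀ i, x i ∈ D) (hα : α < 1)
    (hℓ : ENNReal.ofReal (1 - α) ≤ unifPi n {u | ∀ i, sortedVec ℓ i ≤ sortedVec u i}) :
    ucb D (fun y => inducedMean (sSup D) y ℓ) α x ≤ inducedMean (sSup D) x ℓ :=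
  csInf_le (bddBelow_ofReal_le_unifPi_bfun_le hD _ hx hα) <|
    hℓ.trans <| measure_mono fun _ hu => bfun_inducedMean_le hD hx hu

end UpperConfidenceBound

section Hoeffding

variable {n : ℕ} {β : ℝ} {ℓ : Fin n → ℝ}

lemma sortedVec_max_zero_div_sub (hℓ : ∀ i : Fin n, ℓ i = max 0 (((i : ℕ) + 1) / n - β)) :
    sortedVec ℓ = ℓ := by
  have hmono : Monotone ℓ := fun i j hij => by
    have : (i : ℕ) ≤ j := hij
    rw [hℓ, hℓ]
    gcongr
  rw [sortedVec, Tuple.sort_eq_refl_iff_monotone.2 hmono, Equiv.coe_refl, Function.comp_id]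

lemma smirnovBand_ae_le (hℓ : ∀ i : Fin n, ℓ i = max 0 (((i : ℕ) + 1) / n - β)) :
    ∀ᵐ u ∂unifPi n, u ∈ smirnovBand n β → u ∈ {u | ∀ i, sortedVec ℓ i ≤ sortedVec u i} :=
  (ae_unifPi_mem_Ico n).mono fun u hu hband i => by
    rw [sortedVec_max_zero_div_sub hℓ, hℓ]
    exact max_le (hu _).1 (hband i)

theorem stmt12_general (hn : n ≠ 0) {D : Set ℝ} (hD : BddAbove D) {a α : ℝ} (haD : a < sSup D)
    (hα : α ∈ Ioo 0 1) (hβ : unifPi n (smirnovBand n β) = ENNReal.ofReal (1 - α))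
    (hℓ : ∀ i : Fin n, ℓ i = max 0 (((i : ℕ) + 1) / n - β)) {x : Fin n → ℝ} (hxD : ∀ i, x i ∈ D)
    (hxa : ∀ i, a ≤ x i) :
    ucb D (fun y => inducedMean (sSup D) y ℓ) α x <
      (∑ i, x i) / n + (sSup D - a) * Real.sqrt (Real.log (1 / α) / (2 * n)) := by
  have hβ0 : 0 < β := by
    by_contra! h
    exact (ENNReal.ofReal_pos.2 (sub_pos.2 hα.2)).ne' (hβ ▸ unifPi_smirnovBand_eq_zero hn h)
  have hℓ_band : ℓ ∈ smirnovBand n β := fun i => by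
    rw [sortedVec_max_zero_div_sub hℓ, hℓ]
    exact le_max_right _ _
  calc ucb D (fun y => inducedMean (sSup D) y ℓ) α x
      ≤ inducedMean (sSup D) x ℓ :=
        ucb_inducedMean_le hD hxD hα.2 (hβ ▸ measure_mono_ae (smirnovBand_ae_le hℓ))
    _ ≤ (∑ i, x i) / n + (sSup D - a) * β :=
        inducedMean_le_mean_add hn hβ0.le (fun i => ⟨hxa i, le_csSup hD (hxD i)⟩) hℓ_band
    _ < _ := by
        have := sub_pos.2 haD
        gcongr
        exact lt_sqrt_log_div_of_unifPi_smirnovBand_eq hα hβ0 hn hβ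

end Hoeffding

/-- Comparison with Hoeffding's bound: with `ℓ_i = max(0, i/n - β)`
where `β` is the one-sided Kolmogorov–Smirnov constant, `D⁺ = (-∞, b]`, and
`T(y) = m_{D⁺}(y, ℓ)`, for every `x ∈ [a,b]ⁿ` the UCB is at most Hoeffding's
`x̄ + (b-a)√(ln(1/α)/(2n))`, strictly when `n ≥ 3`. -/
theorem stmt12 {n : ℕ} (hn : 1 ≤ n) (a b : ℝ) (hab : a < b)
    (α : ℝ) (hα : α ∈ Set.Ioc (0:ℝ) (1/2)) (β : ℝ)
    (hβ : unifPi n {u | ∀ i : Fin n, ((i : ℕ) + 1) / n - β ≤ sortedVec u i}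
      = ENNReal.ofReal (1 - α))
    (ℓ : Fin n → ℝ) (hℓdef : ∀ i : Fin n, ℓ i = max 0 (((i : ℕ) + 1) / n - β)) :
    ∀ x : Fin n → ℝ, (∀ i, x i ∈ Set.Icc a b) →
      ucb (Set.Iic b) (fun y => inducedMean b y ℓ) α x
        ≤ (∑ i, x i) / n + (b - a) * Real.sqrt (Real.log (1 / α) / (2 * n)) ∧
      (3 ≤ n → ucb (Set.Iic b) (fun y => inducedMean b y ℓ) α x
        < (∑ i, x i) / n + (b - a) * Real.sqrt (Real.log (1 / α) / (2 * n))) := by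
  intro x hx
  have hlt := stmt12_general (Nat.one_le_iff_ne_zero.1 hn) bddAbove_Iic (by rwa [csSup_Iic])
    ⟨hα.1, by linarith [hα.2]⟩ hβ hℓdef (fun i => (hx i).2) fun i => (hx i).1
  rw [csSup_Iic] at hlt
  exact ⟨hlt.le, fun _ => hlt⟩
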